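/- Let (W*, W₀) be jointly Gaussian of dimension d + m with mean (ξ, 0) and covariance blocks Cov(W*) = Ψ + H Γ̄ Hᵀ, Cov(W*, W₀) = H Γ̄, Cov(W₀) = Γ̄. Then the conditional random vector (W* | W₀ + τ > 0) has the same distribution as Y = ξ + H U + W, where U =_d (W₀' | W₀' + τ > 0) with W₀' ~ N_m(0, Γ̄) independent of W ~ N_d(0, Ψ). -/

import Mathlib

open Matrix MeasureTheory ProbabilityTheory

/-- The multivariate Gaussian density with mean `μ` and covariance `S`. -/
noncomputable def gaussPdf {ι : Type*} [Fintype ι] [DecidableEq ι] (μ : ι → ℝ)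
    (S : Matrix ι ι ℝ) (x : ι → ℝ) : ℝ :=
  (2 * Real.pi) ^ (-(Fintype.card ι : ℝ) / 2) * S.det ^ (-(1 : ℝ) / 2) *
    Real.exp (-((x - μ) ⬝ᵥ (S⁻¹ *ᵥ (x - μ))) / 2)

/-!
If `U ∼ N(0, Γ)` and `W ∼ N(0, Ψ)` are independent, then `(ξ + H U + W, U)` is Gaussian with exactly
the mean and covariance blocks of `(W*, W₀)`: the joint density factors as the density of `U` times
the conditional density of `W*` given `U`, and the shear `(u, w) ↦ (ξ + H u + w, u)` preserves
Lebesgue measure. Selecting on the second component is then conditioning `U` alone, which leaves the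
independent summand `W` untouched.
-/

section ConditionedMeasures

variable {α β : Type*} [MeasurableSpace α] [MeasurableSpace β]

theorem map_withDensity_comp {μ : Measure α} {T : α → β} (hT : Measurable T) {f : β → ENNReal}
    (hf : Measurable f) :
    (μ.withDensity (f ∘ T)).map T = (μ.map T).withDensity f := by
  ext s hs
  rw [Measure.map_apply hT hs, withDensity_apply _ (hT hs), withDensity_apply _ hs,
    setLIntegral_map hs hf hT, Function.comp_def]

theorem cond_map {μ : Measure α} {T : α → β} (hT : Measurable T) {s : Set β}
    (hs : MeasurableSet s) : (μ.map T)[|s] = μ[|T ⁻¹' s].map T := by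
  rw [ProbabilityTheory.cond, ProbabilityTheory.cond, Measure.restrict_map hT hs,
    Measure.map_apply hT hs, Measure.map_smul]

theorem cond_prod_fst_preimage {μ : Measure α} [SFinite μ] {ν : Measure β} [IsProbabilityMeasure ν]
    (s : Set α) : (μ.prod ν)[|Prod.fst ⁻¹' s] = μ[|s].prod ν := by
  rw [ProbabilityTheory.cond, ProbabilityTheory.cond, ← Set.prod_univ, Measure.prod_prod,
    measure_univ, mul_one, ← Measure.prod_restrict, Measure.restrict_univ, Measure.prod_smul_left]

end ConditionedMeasures

section GaussianDensity

variable {ι κ : Type*} [Fintype ι] [DecidableEq ι] [Fintype κ] [DecidableEq κ]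

theorem gaussPdf_nonneg (μ : ι → ℝ) {S : Matrix ι ι ℝ} (hS : 0 ≤ S.det) (x : ι → ℝ) :
    0 ≤ gaussPdf μ S x := by
  unfold gaussPdf
  positivity

theorem continuous_gaussPdf (μ : ι → ℝ) (S : Matrix ι ι ℝ) : Continuous (gaussPdf μ S) := by
  unfold gaussPdf
  fun_prop

theorem measurable_ofReal_gaussPdf (μ : ι → ℝ) (S : Matrix ι ι ℝ) :
    Measurable fun x ↦ ENNReal.ofReal (gaussPdf μ S x) :=
  (continuous_gaussPdf μ S).measurable.ennreal_ofReal

theorem gaussPdf_add_left (c μ : ι → ℝ) (S : Matrix ι ι ℝ) (x : ι → ℝ) :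
    gaussPdf (c + μ) S (c + x) = gaussPdf μ S x := by
  simp only [gaussPdf, add_sub_add_left_eq_sub]

theorem det_mul_mul_transpose_rpow (L : Matrix ι ι ℝ) {D : Matrix ι ι ℝ} (hD : 0 ≤ D.det) :
    (L * D * Lᵀ).det ^ (-(1 : ℝ) / 2) = |L.det|⁻¹ * D.det ^ (-(1 : ℝ) / 2) := by
  have hdet : (L * D * Lᵀ).det = |L.det| ^ (2 : ℝ) * D.det := by
    rw [det_mul, det_mul, det_transpose, Real.rpow_two, sq_abs]
    ring
  rw [hdet, Real.mul_rpow (by positivity) hD, ← Real.rpow_mul (abs_nonneg _)]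
  norm_num [Real.rpow_neg_one]

theorem mulVec_dotProduct_inv_mul_mul_transpose_mulVec {L : Matrix ι ι ℝ} (hL : IsUnit L.det)
    (D : Matrix ι ι ℝ) (y : ι → ℝ) :
    (L *ᵥ y) ⬝ᵥ ((L * D * Lᵀ)⁻¹ *ᵥ (L *ᵥ y)) = y ⬝ᵥ (D⁻¹ *ᵥ y) := by
  have hinv : Lᵀ * (L * D * Lᵀ)⁻¹ * L = D⁻¹ := by
    rw [Matrix.mul_inv_rev, Matrix.mul_inv_rev,
      mul_nonsing_inv_cancel_left _ _ (isUnit_det_transpose L hL),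
      nonsing_inv_mul_cancel_right _ _ hL]
  rw [← hinv, ← mulVec_mulVec, ← mulVec_mulVec, dotProduct_mulVec y, vecMul_transpose]

theorem gaussPdf_mulVec (μ : ι → ℝ) {L D : Matrix ι ι ℝ} (hL : L.det ≠ 0) (hD : 0 ≤ D.det)
    (x : ι → ℝ) : gaussPdf (L *ᵥ μ) (L * D * Lᵀ) (L *ᵥ x) = |L.det|⁻¹ * gaussPdf μ D x := by
  simp only [gaussPdf, ← mulVec_sub, det_mul_mul_transpose_rpow L hD,
    mulVec_dotProduct_inv_mul_mul_transpose_mulVec hL.isUnit]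
  ring

theorem gaussPdf_fromBlocks_diagonal (μ : ι → ℝ) (ν : κ → ℝ) {A : Matrix ι ι ℝ} {B : Matrix κ κ ℝ}
    (hA : 0 < A.det) (hB : 0 < B.det) (x : ι → ℝ) (y : κ → ℝ) :
    gaussPdf (Sum.elim μ ν) (fromBlocks A 0 0 B) (Sum.elim x y) =
      gaussPdf μ A x * gaussPdf ν B y := by
  have hsub : Sum.elim x y - Sum.elim μ ν = Sum.elim (x - μ) (y - ν) := by
    ext (i | i) <;> rfl
  have hinv : (fromBlocks A 0 0 B)⁻¹ = fromBlocks A⁻¹ 0 0 B⁻¹ := by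
    have hunit : IsUnit A ↔ IsUnit B := iff_of_true (A.isUnit_iff_isUnit_det.2 hA.ne'.isUnit)
      (B.isUnit_iff_isUnit_det.2 hB.ne'.isUnit)
    simpa using inv_fromBlocks_zero₂₁_of_isUnit_iff A 0 B hunit
  have hquad : Sum.elim (x - μ) (y - ν) ⬝ᵥ (fromBlocks A⁻¹ 0 0 B⁻¹ *ᵥ Sum.elim (x - μ) (y - ν)) =
      (x - μ) ⬝ᵥ (A⁻¹ *ᵥ (x - μ)) + (y - ν) ⬝ᵥ (B⁻¹ *ᵥ (y - ν)) := by
    simp [fromBlocks_mulVec, sumElim_dotProduct_sumElim]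
  simp only [gaussPdf, hsub, hinv, hquad, det_fromBlocks_zero₂₁, Real.mul_rpow hA.le hB.le,
    Fintype.card_sum, Nat.cast_add, neg_add, add_div, Real.exp_add,
    Real.rpow_add (by positivity : (0 : ℝ) < 2 * Real.pi)]
  ring

theorem fromBlocks_eq_shear_mul_diagonal_mul_transpose (H : Matrix ι κ ℝ) (Ψ : Matrix ι ι ℝ)
    (Γ : Matrix κ κ ℝ) :
    fromBlocks (Ψ + H * Γ * Hᵀ) (H * Γ) (Γ * Hᵀ) Γ =
      fromBlocks 1 H 0 1 * fromBlocks Ψ 0 0 Γ * (fromBlocks 1 H 0 1)ᵀ := by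
  simp [fromBlocks_multiply, fromBlocks_transpose]

theorem gaussPdf_fromBlocks_eq_marginal_mul_conditional (ξ : ι → ℝ) (η : κ → ℝ) (H : Matrix ι κ ℝ)
    {Ψ : Matrix ι ι ℝ} {Γ : Matrix κ κ ℝ} (hΨ : 0 < Ψ.det) (hΓ : 0 < Γ.det) (x : ι → ℝ)
    (u : κ → ℝ) :
    gaussPdf (Sum.elim ξ η) (fromBlocks (Ψ + H * Γ * Hᵀ) (H * Γ) (Γ * Hᵀ) Γ) (Sum.elim x u) =
      gaussPdf η Γ u * gaussPdf (ξ + H *ᵥ (u - η)) Ψ x := by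
  have hshear (z : ι → ℝ) (v : κ → ℝ) :
      Sum.elim z v = fromBlocks 1 H 0 1 *ᵥ Sum.elim (z - H *ᵥ v) v := by
    simp [fromBlocks_mulVec]
  have hdet : (fromBlocks Ψ 0 0 Γ).det = Ψ.det * Γ.det := det_fromBlocks_zero₂₁ _ _ _
  rw [fromBlocks_eq_shear_mul_diagonal_mul_transpose, hshear ξ η, hshear x u,
    gaussPdf_mulVec _ (by simp) (hdet ▸ (mul_pos hΨ hΓ).le),
    gaussPdf_fromBlocks_diagonal _ _ hΨ hΓ, ← gaussPdf_add_left (H *ᵥ u) (ξ - H *ᵥ η)]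
  have hmean : H *ᵥ u + (ξ - H *ᵥ η) = ξ + H *ᵥ (u - η) := by
    rw [mulVec_sub]
    abel
  simp [hmean, mul_comm]

theorem gaussPdf_one_eq_prod (μ x : ι → ℝ) :
    gaussPdf μ 1 x = ∏ i, gaussianPDFReal (μ i) 1 (x i) := by
  have hconst : (2 * Real.pi) ^ (-(Fintype.card ι : ℝ) / 2) =
      (√(2 * Real.pi))⁻¹ ^ Fintype.card ι := by
    rw [Real.sqrt_eq_rpow, ← Real.rpow_neg (by positivity), ← Real.rpow_natCast,
      ← Real.rpow_mul (by positivity)]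
    ring_nf
  simp only [gaussPdf, gaussianPDFReal, NNReal.coe_one, mul_one, Finset.prod_mul_distrib,
    Finset.prod_const, Finset.card_univ, ← hconst, ← Real.exp_sum, det_one, Real.one_rpow, inv_one,
    one_mulVec, Pi.sub_apply, dotProduct, Finset.sum_div, Finset.sum_neg_distrib, neg_div, pow_two]

end GaussianDensity

theorem measurePreserving_shear {ι κ : Type*} [Fintype ι] [Fintype κ] (ξ : ι → ℝ)
    (H : Matrix ι κ ℝ) :
    MeasurePreserving (fun p : (κ → ℝ) × (ι → ℝ) ↦ (ξ + H *ᵥ p.1 + p.2, p.1)) := by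
  have hskew : MeasurePreserving (fun p : (κ → ℝ) × (ι → ℝ) ↦ (p.1, ξ + H *ᵥ p.1 + p.2)) :=
    (MeasurePreserving.id volume).skew_product (g := fun u w ↦ ξ + H *ᵥ u + w)
      (by unfold Function.uncurry; fun_prop)
      (.of_forall fun u ↦ map_add_left_eq_self volume (ξ + H *ᵥ u))
  exact Measure.measurePreserving_swap.comp hskew

section GaussianMeasure

variable {ι κ : Type*} [Fintype ι] [DecidableEq ι] [Fintype κ] [DecidableEq κ]

/-- The Gaussian law `N(μ, S)` on `ι → ℝ`, given by its density with respect to Lebesgue measure;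
it is a probability measure when `S` is positive definite. -/
noncomputable def gaussMeasure (μ : ι → ℝ) (S : Matrix ι ι ℝ) : Measure (ι → ℝ) :=
  volume.withDensity fun x ↦ ENNReal.ofReal (gaussPdf μ S x)

instance sigmaFinite_gaussMeasure (μ : ι → ℝ) (S : Matrix ι ι ℝ) : SigmaFinite (gaussMeasure μ S) :=
  SigmaFinite.withDensity_ofReal _

theorem isProbabilityMeasure_gaussMeasure_one (μ : ι → ℝ) :
    IsProbabilityMeasure (gaussMeasure μ 1) := by
  constructor
  have hint : Integrable fun x : ι → ℝ ↦ ∏ i, gaussianPDFReal (μ i) 1 (x i) :=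
    .fintype_prod fun i ↦ integrable_gaussianPDFReal (μ i) 1
  have hnonneg (x : ι → ℝ) : 0 ≤ ∏ i, gaussianPDFReal (μ i) 1 (x i) :=
    Finset.prod_nonneg fun i _ ↦ gaussianPDFReal_nonneg (μ i) 1 (x i)
  simp only [gaussMeasure, withDensity_apply _ .univ, Measure.restrict_univ, gaussPdf_one_eq_prod]
  rw [← ofReal_integral_eq_lintegral_ofReal hint (.of_forall hnonneg),
    integral_fintype_prod_volume_eq_prod fun i ↦ gaussianPDFReal (μ i) 1]
  simp [integral_gaussianPDFReal_eq_one]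

theorem map_mulVec_gaussMeasure (μ : ι → ℝ) {L D : Matrix ι ι ℝ} (hL : L.det ≠ 0)
    (hD : 0 ≤ D.det) :
    (gaussMeasure μ D).map (L *ᵥ ·) = gaussMeasure (L *ᵥ μ) (L * D * Lᵀ) := by
  have hvol : (volume : Measure (ι → ℝ)).map (L *ᵥ ·) = ENNReal.ofReal |L.det|⁻¹ • volume := by
    rw [← abs_inv]
    exact Real.map_matrix_volume_pi_eq_smul_volume_pi hL
  have hdens : (fun x ↦ ENNReal.ofReal (gaussPdf μ D x)) = ENNReal.ofReal |L.det| •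
      ((fun y ↦ ENNReal.ofReal (gaussPdf (L *ᵥ μ) (L * D * Lᵀ) y)) ∘ (L *ᵥ ·)) := by
    ext x
    simp only [Pi.smul_apply, Function.comp_apply, smul_eq_mul, gaussPdf_mulVec μ hL hD,
      ← ENNReal.ofReal_mul (abs_nonneg L.det), mul_inv_cancel_left₀ (abs_ne_zero.2 hL)]
  have hmulVec : Measurable (L *ᵥ · : (ι → ℝ) → ι → ℝ) := by fun_prop
  have hpdf := measurable_ofReal_gaussPdf (L *ᵥ μ) (L * D * Lᵀ)
  rw [gaussMeasure, hdens, withDensity_smul _ (hpdf.comp hmulVec), Measure.map_smul,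
    map_withDensity_comp hmulVec hpdf, hvol, withDensity_smul_measure, smul_smul,
    ← ENNReal.ofReal_mul (abs_nonneg _), mul_inv_cancel₀ (abs_ne_zero.2 hL), ENNReal.ofReal_one,
    one_smul, gaussMeasure]

theorem exists_eq_mul_transpose_of_posDef {S : Matrix ι ι ℝ} (hS : S.PosDef) :
    ∃ L : Matrix ι ι ℝ, L.det ≠ 0 ∧ S = L * Lᵀ := by
  open scoped MatrixOrder Matrix.Norms.L2Operator in
  obtain ⟨L, hL, hSL⟩ := CStarAlgebra.isStrictlyPositive_iff_eq_mul_star_self.1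
    hS.isStrictlyPositive
  exact ⟨L, (L.isUnit_iff_isUnit_det.1 hL).ne_zero, hSL⟩

theorem isProbabilityMeasure_gaussMeasure (μ : ι → ℝ) {S : Matrix ι ι ℝ} (hS : S.PosDef) :
    IsProbabilityMeasure (gaussMeasure μ S) := by
  obtain ⟨L, hL, rfl⟩ := exists_eq_mul_transpose_of_posDef hS
  have hmap : (gaussMeasure (L⁻¹ *ᵥ μ) 1).map (L *ᵥ ·) = gaussMeasure μ (L * Lᵀ) := by
    simpa [mul_nonsing_inv L hL.isUnit] using
      map_mulVec_gaussMeasure (L⁻¹ *ᵥ μ) (D := 1) hL (by simp)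
  have := isProbabilityMeasure_gaussMeasure_one (L⁻¹ *ᵥ μ)
  exact hmap ▸ Measure.isProbabilityMeasure_map (by fun_prop)

theorem map_shear_prod_gaussMeasure (ξ : ι → ℝ) (H : Matrix ι κ ℝ) {Ψ : Matrix ι ι ℝ}
    {Γ : Matrix κ κ ℝ} (hΨ : 0 < Ψ.det) (hΓ : 0 < Γ.det) :
    ((gaussMeasure 0 Γ).prod (gaussMeasure 0 Ψ)).map (fun p ↦ (ξ + H *ᵥ p.1 + p.2, p.1)) =
      volume.withDensity fun p : (ι → ℝ) × (κ → ℝ) ↦ ENNReal.ofReal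
        (gaussPdf (Sum.elim ξ 0) (fromBlocks (Ψ + H * Γ * Hᵀ) (H * Γ) (Γ * Hᵀ) Γ)
          (Sum.elim p.1 p.2)) := by
  have hshear := measurePreserving_shear ξ H
  have hdens (p : (κ → ℝ) × (ι → ℝ)) :
      ENNReal.ofReal (gaussPdf 0 Γ p.1) * ENNReal.ofReal (gaussPdf 0 Ψ p.2) =
        ENNReal.ofReal (gaussPdf (Sum.elim ξ 0)
          (fromBlocks (Ψ + H * Γ * Hᵀ) (H * Γ) (Γ * Hᵀ) Γ)
          (Sum.elim (ξ + H *ᵥ p.1 + p.2) p.1)) := by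
    rw [gaussPdf_fromBlocks_eq_marginal_mul_conditional ξ 0 H hΨ hΓ, sub_zero,
      ← gaussPdf_add_left (ξ + H *ᵥ p.1) 0 Ψ p.2, add_zero,
      ENNReal.ofReal_mul (gaussPdf_nonneg 0 hΓ.le p.1)]
  have hsumElim : Measurable fun p : (ι → ℝ) × (κ → ℝ) ↦ Sum.elim p.1 p.2 :=
    measurable_pi_iff.2 (by rintro (i | i) <;> dsimp only [Sum.elim_inl, Sum.elim_inr] <;> fun_prop)
  rw [gaussMeasure, gaussMeasure, prod_withDensity (measurable_ofReal_gaussPdf _ _)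
    (measurable_ofReal_gaussPdf _ _), ← Measure.volume_eq_prod]
  simp only [hdens]
  have hmap := map_withDensity_comp (μ := volume) hshear.measurable
    ((measurable_ofReal_gaussPdf (Sum.elim ξ 0)
      (fromBlocks (Ψ + H * Γ * Hᵀ) (H * Γ) (Γ * Hᵀ) Γ)).comp hsumElim)
  rwa [hshear.map_eq] at hmap

end GaussianMeasure

theorem measurableSet_forall_pos_add {κ : Type*} [Countable κ] (τ : κ → ℝ) :
    MeasurableSet {u : κ → ℝ | ∀ i, 0 < u i + τ i} := by
  simp only [Set.ofPred_forall]
  exact .iInter fun i ↦ measurableSet_lt measurable_const (by fun_prop)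

theorem sun_selection_eq_convolution_general {ι κ : Type*} [Fintype ι] [DecidableEq ι] [Fintype κ]
    [DecidableEq κ] (ξ : ι → ℝ) (H : Matrix ι κ ℝ) {Ψ : Matrix ι ι ℝ} {Γ : Matrix κ κ ℝ}
    (hΨ : Ψ.PosDef) (hΓ : Γ.PosDef) {s : Set (κ → ℝ)} (hs : MeasurableSet s) :
    Measure.map Prod.fst
        (ProbabilityTheory.cond (volume.withDensity fun p : (ι → ℝ) × (κ → ℝ) ↦ ENNReal.ofReal
          (gaussPdf (Sum.elim ξ 0) (fromBlocks (Ψ + H * Γ * Hᵀ) (H * Γ) (Γ * Hᵀ) Γ)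
            (Sum.elim p.1 p.2))) (Prod.snd ⁻¹' s)) =
      Measure.map (fun p ↦ ξ + H *ᵥ p.1 + p.2)
        ((gaussMeasure 0 Γ)[|s].prod (gaussMeasure 0 Ψ)) := by
  have hshear := (measurePreserving_shear ξ H).measurable
  have := isProbabilityMeasure_gaussMeasure 0 hΨ
  rw [← map_shear_prod_gaussMeasure ξ H hΨ.det_pos hΓ.det_pos, cond_map hshear (measurable_snd hs),
    Measure.map_map measurable_fst hshear, ← cond_prod_fst_preimage]
  rfl

/-- the selection representation `(W* | W₀ + τ > 0)` of the SUN
distribution, where `(W*, W₀)` is jointly Gaussian with mean `(ξ, 0)` and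
covariance blocks `Ψ + HΓ̄Hᵀ`, `HΓ̄`, `Γ̄Hᵀ`, `Γ̄`, has the same law as the
convolution representation `Y = ξ + H U + W` with `U =_d (W₀' | W₀' + τ > 0)`,
`W₀' ~ N_m(0, Γ̄)` independent of `W ~ N_d(0, Ψ)`. -/
theorem sun_selection_eq_convolution
    (d m : ℕ) (ξ : Fin d → ℝ) (τ : Fin m → ℝ) (H : Matrix (Fin d) (Fin m) ℝ)
    (Ψ : Matrix (Fin d) (Fin d) ℝ) (Γ : Matrix (Fin m) (Fin m) ℝ)
    (hΨ : Ψ.PosDef) (hΓ : Γ.PosDef) :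
    Measure.map (fun p : (Fin d → ℝ) × (Fin m → ℝ) => p.1)
        (ProbabilityTheory.cond
          (volume.withDensity fun p : (Fin d → ℝ) × (Fin m → ℝ) =>
            ENNReal.ofReal (gaussPdf (Sum.elim ξ (0 : Fin m → ℝ))
              (Matrix.fromBlocks (Ψ + H * Γ * Hᵀ) (H * Γ) (Γ * Hᵀ) Γ)
              (Sum.elim p.1 p.2)))
          {p : (Fin d → ℝ) × (Fin m → ℝ) | ∀ i, 0 < p.2 i + τ i}) =
      Measure.map (fun p : (Fin m → ℝ) × (Fin d → ℝ) => ξ + H *ᵥ p.1 + p.2)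
        ((ProbabilityTheory.cond
            (volume.withDensity fun u => ENNReal.ofReal (gaussPdf (0 : Fin m → ℝ) Γ u))
            {u : Fin m → ℝ | ∀ i, 0 < u i + τ i}).prod
          (volume.withDensity fun w => ENNReal.ofReal (gaussPdf (0 : Fin d → ℝ) Ψ w))) := by
  simpa only [gaussMeasure, Set.preimage_ofPred_eq] using
    sun_selection_eq_convolution_general ξ H hΨ hΓ (measurableSet_forall_pos_add τ)
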